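/- (Corollary 3.) In the CreditRisk⁺ model, fix a confidence level δ ∈ (0,1) and let q_δ(L) be the value-at-risk of L under P_α. Then for every i = 1,…,n the Expected Shortfall contribution satisfies E_α[N_i | L ≥ q_δ(L)] = (S₀ r_{0,i} P_α[L ≥ q_δ(L) − ν_i] + Σ_{j=1}^k α_j β_j r_{j,i} P_{α(j)}[L ≥ q_δ(L) − ν_i]) / P_α[L ≥ q_δ(L)], where the event {L ≥ q_δ(L) − ν_i} is all of the sample space when q_δ(L) ≤ ν_i. -/

import Mathlib

open MeasureTheory ProbabilityTheory Real

noncomputable section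

/-- The gamma measure is sigma-finite (needed to form product measures). -/
instance gammaMeasure.instSigmaFinite (a r : ℝ) :
    SigmaFinite (gammaMeasure a r) := by
  unfold ProbabilityTheory.gammaMeasure ProbabilityTheory.gammaPDF
  infer_instance

/-- Conditional Poisson intensity `R_i(s) = r_{0,i} S_0 + sum_j r_{j,i} s_j`. -/
def crpR {n k : ℕ} (S0 : ℝ) (r0 : Fin n → ℝ) (r : Fin k → Fin n → ℝ)
    (s : Fin k → ℝ) (i : Fin n) : ℝ :=
  r0 i * S0 + ∑ j, r j i * s j

/-- The CreditRisk⁺ measure `P_α` on `(Fin k → ℝ) × (Fin n → ℕ)`: the product of the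
Gamma factor measures (shape `α j`, scale `β j`, i.e. rate `(β j)⁻¹`), composed with the
kernel sending the factor vector `s` to the product of Poisson measures with means `R_i(s)`,
recorded jointly with `s`. -/
def crpMeasure {n k : ℕ} (S0 : ℝ) (r0 : Fin n → ℝ) (r : Fin k → Fin n → ℝ)
    (α β : Fin k → ℝ) : Measure ((Fin k → ℝ) × (Fin n → ℕ)) :=
  (Measure.pi fun j => gammaMeasure (α j) (β j)⁻¹).bind fun s =>
    (Measure.pi fun i => poissonMeasure (crpR S0 r0 r s i).toNNReal).map fun x => (s, x)

/-- Portfolio loss `L = ∑ ν_i N_i`. -/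
def crpLoss {n k : ℕ} (ν : Fin n → ℕ) (x : (Fin k → ℝ) × (Fin n → ℕ)) : ℕ :=
  ∑ i, ν i * x.2 i

/-- Value-at-risk of the ℕ-valued loss `L` at level `δ`: the smallest `l` with
`P[L ≤ l] ≥ δ` (a natural number since `L` is ℕ-valued). -/
def crpVaR {n k : ℕ} (P : Measure ((Fin k → ℝ) × (Fin n → ℕ)))
    (ν : Fin n → ℕ) (δ : ℝ) : ℕ :=
  sInf {l : ℕ | ENNReal.ofReal δ ≤ P {x | crpLoss ν x ≤ l}}

/-- `ρ_g`, the radius of convergence of the probability generating function. -/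
def crpRadius {n k : ℕ} (ν : Fin n → ℕ) (r : Fin k → Fin n → ℝ) (β : Fin k → ℝ) : ℝ :=
  sSup {z : ℝ | 0 < z ∧ ∀ j, ∑ i, r j i * z ^ ν i < 1 + (β j)⁻¹}

/-!
Size-biasing a Poisson variable with mean `λ` adds one to it: `E[N f(N)] = λ E[f(N + 1)]`.
Conditionally on the factors this gives `E[N_i f(N) | S] = R_i(S) E[f(N + e_i) | S]`, and for
`f = 1_{L ≥ q}` the shift by `e_i` lowers the threshold to `q - ν_i`. The intensity `R_i` is affine
in the factors, and size-biasing a Gamma variable raises its shape by one: weighting `P_α` by `S_j`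
gives `α_j β_j` times `P_{α(j)}`.
-/

open scoped NNReal ENNReal

section ProductMeasures

variable {ι : Type*} {X : ι → Type*} [∀ i, MeasurableSpace (X i)]

instance sigmaFinite_update [DecidableEq ι] (μ : ∀ i, Measure (X i)) [∀ j, SigmaFinite (μ j)]
    (i : ι) (ρ : Measure (X i)) [SigmaFinite ρ] (j : ι) :
    SigmaFinite (Function.update μ i ρ j) := by
  obtain rfl | hj := eq_or_ne j i
  · rwa [Function.update_self]
  · rw [Function.update_of_ne hj]
    infer_instance

variable [Fintype ι]

lemma measurable_measure_pi {Ω : Type*} [MeasurableSpace Ω] {μ : ∀ i, Ω → Measure (X i)}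
    [∀ i ω, IsProbabilityMeasure (μ i ω)] (hμ : ∀ i, Measurable (μ i)) :
    Measurable fun ω => Measure.pi fun i => μ i ω := by
  refine .measure_of_isPiSystem_of_isProbabilityMeasure generateFrom_pi.symm isPiSystem_pi ?_
  rintro _ ⟨s, hs, rfl⟩
  simp_rw [Measure.pi_pi]
  exact Finset.measurable_prod _ fun i _ =>
    (Measure.measurable_coe (hs i (Set.mem_univ i))).comp (hμ i)

variable [DecidableEq ι] (μ : ∀ i, Measure (X i)) (i : ι)

lemma prod_update_measure_apply (ρ : Measure (X i)) (s : ∀ i, Set (X i)) :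
    ∏ j, Function.update μ i ρ j (s j) = ρ (s i) * ∏ j ∈ Finset.univ.erase i, μ j (s j) := by
  simp_rw [Function.apply_update (fun j (ρ' : Measure (X j)) => ρ' (s j)) μ i ρ,
    Finset.prod_update_of_mem (Finset.mem_univ i), Finset.sdiff_singleton_eq_erase]

variable [∀ j, SigmaFinite (μ j)]

lemma pi_update_smul (c : ℝ≥0) (ρ : Measure (X i)) [SigmaFinite ρ] :
    Measure.pi (Function.update μ i (c • ρ)) = c • Measure.pi (Function.update μ i ρ) := by
  refine Measure.pi_eq fun s _ => ?_
  rw [prod_update_measure_apply, Measure.smul_apply, Measure.smul_apply, Measure.pi_pi,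
    prod_update_measure_apply, smul_mul_assoc]

lemma pi_update_withDensity {h : X i → ℝ≥0∞} (hh : Measurable h)
    [SigmaFinite ((μ i).withDensity h)] :
    Measure.pi (Function.update μ i ((μ i).withDensity h)) =
      (Measure.pi μ).withDensity fun x => h (x i) := by
  refine Measure.pi_eq fun s hs => ?_
  calc (Measure.pi μ).withDensity (fun x => h (x i)) (Set.univ.pi s)
      = ∫⁻ x, h (x i) ∂Measure.pi fun j => (μ j).restrict (s j) := by
        rw [withDensity_apply _ (.univ_pi hs), Measure.restrict_pi_pi]
    _ = (∏ j ∈ Finset.univ.erase i, μ j (s j)) * (μ i).withDensity h (s i) := by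
        rw [← lintegral_map (g := Function.eval i) hh (measurable_pi_apply i), Measure.pi_map_eval,
          lintegral_smul_measure, withDensity_apply _ (hs i), smul_eq_mul]
        simp_rw [Measure.restrict_apply_univ]
    _ = ∏ j, Function.update μ i ((μ i).withDensity h) j (s j) := by
        rw [prod_update_measure_apply, mul_comm]

lemma pi_update_map {g : X i → X i} (hg : Measurable g) [SigmaFinite ((μ i).map g)] :
    Measure.pi (Function.update μ i ((μ i).map g)) =
      (Measure.pi μ).map fun x => Function.update x i (g (x i)) := by
  refine Measure.pi_eq fun s hs => ?_
  have hpre : (fun x : ∀ j, X j => Function.update x i (g (x i))) ⁻¹' Set.univ.pi s =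
      Set.univ.pi (Function.update s i (g ⁻¹' s i)) := by
    ext x
    simp only [Set.mem_preimage, Set.mem_univ_pi]
    refine forall_congr' fun j => ?_
    obtain rfl | hj := eq_or_ne j i
    · simp
    · simp [hj]
  rw [Measure.map_apply (by fun_prop) (.univ_pi hs), hpre, Measure.pi_pi,
    prod_update_measure_apply, Measure.map_apply hg (hs i)]
  simp_rw [Function.apply_update (fun j => μ j) s i,
    Finset.prod_update_of_mem (Finset.mem_univ i), Finset.sdiff_singleton_eq_erase]

lemma lintegral_pi_eval_mul {h : X i → ℝ≥0∞} (hh : Measurable h) {c : ℝ≥0} {ρ : Measure (X i)}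
    [SigmaFinite ρ] (hρ : (μ i).withDensity h = c • ρ) {f : (∀ j, X j) → ℝ≥0∞}
    (hf : Measurable f) :
    ∫⁻ x, h (x i) * f x ∂Measure.pi μ = c * ∫⁻ x, f x ∂Measure.pi (Function.update μ i ρ) := by
  have : SigmaFinite ((μ i).withDensity h) := hρ ▸ inferInstance
  calc ∫⁻ x, h (x i) * f x ∂Measure.pi μ
      = ∫⁻ x, f x ∂(Measure.pi μ).withDensity fun x => h (x i) :=
        (lintegral_withDensity_eq_lintegral_mul _ (by fun_prop) hf).symm
    _ = c * ∫⁻ x, f x ∂Measure.pi (Function.update μ i ρ) := by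
        rw [← pi_update_withDensity μ i hh, hρ, pi_update_smul, lintegral_smul_measure,
          ENNReal.smul_def, smul_eq_mul]

end ProductMeasures

section Poisson

lemma measurable_poissonMeasure : Measurable poissonMeasure := by
  refine Measure.measurable_of_measurable_coe _ fun s hs => ?_
  simp_rw [poissonMeasure, Measure.sum_apply _ hs, Measure.smul_apply, smul_eq_mul]
  fun_prop

lemma succ_mul_poissonMeasure_singleton_succ (l : ℝ≥0) (m : ℕ) :
    ((m + 1 : ℕ) : ℝ≥0∞) * poissonMeasure l {m + 1} = l * poissonMeasure l {m} := by
  rw [poissonMeasure_singleton, poissonMeasure_singleton, ← ENNReal.ofReal_natCast,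
    ← ENNReal.ofReal_coe_nnreal, ← ENNReal.ofReal_mul (by positivity),
    ← ENNReal.ofReal_mul (by positivity), Nat.factorial_succ]
  congr 1
  push_cast
  field_simp
  exact pow_succ' _ _

lemma poissonMeasure_withDensity_natCast (l : ℝ≥0) :
    (poissonMeasure l).withDensity (fun m => (m : ℝ≥0∞)) = l • (poissonMeasure l).map (· + 1) := by
  refine Measure.ext_of_singleton fun m => ?_
  rw [withDensity_apply _ (measurableSet_singleton m), lintegral_singleton, Measure.smul_apply,
    Measure.map_apply (by fun_prop) (measurableSet_singleton m), ENNReal.smul_def, smul_eq_mul]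
  cases m with
  | zero => simp [Set.preimage]
  | succ m =>
    have hpre : (· + 1) ⁻¹' {m + 1} = {m} := by ext; simp
    rw [hpre, succ_mul_poissonMeasure_singleton_succ]

lemma lintegral_pi_poissonMeasure_eval_mul {ι : Type*} [Fintype ι] [DecidableEq ι] (l : ι → ℝ≥0)
    (i : ι) (f : (ι → ℕ) → ℝ≥0∞) :
    ∫⁻ x, x i * f x ∂(Measure.pi fun j => poissonMeasure (l j)) =
      l i * ∫⁻ x, f (x + Pi.single i 1) ∂(Measure.pi fun j => poissonMeasure (l j)) := by
  have : SigmaFinite ((poissonMeasure (l i)).map (· + 1)) := IsFiniteMeasure.toSigmaFinite _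
  have hadd (x : ι → ℕ) : Function.update x i (x i + 1) = x + Pi.single i 1 := by
    ext j
    obtain rfl | hj := eq_or_ne j i
    · simp
    · simp [hj]
  have hshift : Measure.pi (Function.update (fun j => poissonMeasure (l j)) i
      ((poissonMeasure (l i)).map (· + 1))) =
      (Measure.pi fun j => poissonMeasure (l j)).map fun x => x + Pi.single i 1 := by
    simp_rw [← hadd]
    exact pi_update_map (fun j => poissonMeasure (l j)) i (by fun_prop)
  calc ∫⁻ x, x i * f x ∂(Measure.pi fun j => poissonMeasure (l j))
      = l i * ∫⁻ x, f x ∂Measure.pi (Function.update (fun j => poissonMeasure (l j)) i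
          ((poissonMeasure (l i)).map (· + 1))) :=
        lintegral_pi_eval_mul (fun j => poissonMeasure (l j)) i (h := fun m => (m : ℝ≥0∞))
          (by fun_prop) (poissonMeasure_withDensity_natCast (l i)) (by fun_prop)
    _ = l i * ∫⁻ x, f (x + Pi.single i 1) ∂(Measure.pi fun j => poissonMeasure (l j)) := by
        rw [hshift, lintegral_map (by fun_prop) (by fun_prop)]

end Poisson

section Gamma

variable {a r : ℝ}

lemma measurable_gammaPDF (a r : ℝ) : Measurable (gammaPDF a r) :=
  (measurable_gammaPDFReal a r).ennreal_ofReal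

lemma ae_nonneg_gammaMeasure (a r : ℝ) : ∀ᵐ x ∂gammaMeasure a r, 0 ≤ x := by
  rw [gammaMeasure, ae_withDensity_iff (measurable_gammaPDF a r)]
  exact ae_of_all _ fun x hx => not_lt.1 fun hneg => hx (gammaPDF_of_neg hneg)

lemma gammaPDFReal_mul_self (ha : 0 < a) (hr : 0 < r) (x : ℝ) :
    gammaPDFReal a r x * x = a / r * gammaPDFReal (a + 1) r x := by
  unfold gammaPDFReal
  split_ifs with hx
  · have hΓ : Real.Gamma a ≠ 0 := (Real.Gamma_pos_of_pos ha).ne'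
    have hpow : x ^ a = x ^ (a - 1) * x := by
      rw [← Real.rpow_add_one' hx (by simpa using ha.ne'), sub_add_cancel]
    rw [Real.Gamma_add_one ha.ne', Real.rpow_add_one hr.ne', add_sub_cancel_right, hpow]
    field_simp
  · simp

lemma gammaMeasure_withDensity_ofReal (ha : 0 < a) (hr : 0 < r) :
    (gammaMeasure a r).withDensity ENNReal.ofReal =
      (a / r).toNNReal • gammaMeasure (a + 1) r := by
  have hmean : 0 ≤ a / r := by positivity
  rw [gammaMeasure, gammaMeasure, ENNReal.smul_def,
    ← withDensity_smul _ (measurable_gammaPDF _ _),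
    ← withDensity_mul _ (measurable_gammaPDF _ _) ENNReal.measurable_ofReal]
  congr 1 with x
  rw [Pi.mul_apply, Pi.smul_apply, smul_eq_mul, gammaPDF, gammaPDF, ENNReal.ofNNReal_toNNReal,
    ← ENNReal.ofReal_mul (gammaPDFReal_nonneg ha hr x), ← ENNReal.ofReal_mul hmean,
    gammaPDFReal_mul_self ha hr]

end Gamma

section FactorLaw

variable {k : ℕ} {α β : Fin k → ℝ}

/-- The law of the factors `S` in the CreditRisk⁺ model: independent Gamma variables of shapes
`α j` and scales `β j`. -/
def crpFactorLaw (α β : Fin k → ℝ) : Measure (Fin k → ℝ) :=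
  Measure.pi fun j => gammaMeasure (α j) (β j)⁻¹

instance : SigmaFinite (crpFactorLaw α β) := by
  unfold crpFactorLaw
  infer_instance

lemma isProbabilityMeasure_crpFactorLaw (hα : ∀ j, 0 < α j) (hβ : ∀ j, 0 < β j) :
    IsProbabilityMeasure (crpFactorLaw α β) := by
  have (j : Fin k) := isProbabilityMeasure_gammaMeasure (hα j) (inv_pos.2 (hβ j))
  unfold crpFactorLaw
  infer_instance

lemma ae_nonneg_crpFactorLaw (α β : Fin k → ℝ) : ∀ᵐ s ∂crpFactorLaw α β, ∀ j, 0 ≤ s j :=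
  ae_all_iff.2 fun _ => Measure.tendsto_eval_ae_ae.eventually (ae_nonneg_gammaMeasure _ _)

lemma lintegral_crpFactorLaw_eval_mul {j : Fin k} (hα : 0 < α j) (hβ : 0 < β j)
    {g : (Fin k → ℝ) → ℝ≥0∞} (hg : Measurable g) :
    ∫⁻ s, ENNReal.ofReal (s j) * g s ∂crpFactorLaw α β =
      ENNReal.ofReal (α j * β j) * ∫⁻ s, g s ∂crpFactorLaw (Function.update α j (α j + 1)) β := by
  have hupdate : crpFactorLaw (Function.update α j (α j + 1)) β = Measure.pi
      (Function.update (fun j => gammaMeasure (α j) (β j)⁻¹) j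
        (gammaMeasure (α j + 1) (β j)⁻¹)) :=
    congrArg Measure.pi <| funext <|
      Function.apply_update (fun j' a => gammaMeasure a (β j')⁻¹) α j (α j + 1)
  rw [hupdate, crpFactorLaw, lintegral_pi_eval_mul (fun j => gammaMeasure (α j) (β j)⁻¹) j
    ENNReal.measurable_ofReal (gammaMeasure_withDensity_ofReal hα (inv_pos.2 hβ)) hg,
    div_inv_eq_mul, ENNReal.ofNNReal_toNNReal]

end FactorLaw

section CreditRisk

variable {n k : ℕ} {S0 : ℝ} {r0 : Fin n → ℝ} {r : Fin k → Fin n → ℝ} {α β : Fin k → ℝ}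

lemma measurable_crpR (S0 : ℝ) (r0 : Fin n → ℝ) (r : Fin k → Fin n → ℝ) (i : Fin n) :
    Measurable fun s => crpR S0 r0 r s i := by
  unfold crpR
  fun_prop

/-- The conditional law of the counts `N` given the factors in the CreditRisk⁺ model: independent
Poisson variables with means `R_i(s)`. -/
def crpCountKernel (S0 : ℝ) (r0 : Fin n → ℝ) (r : Fin k → Fin n → ℝ) :
    Kernel (Fin k → ℝ) (Fin n → ℕ) where
  toFun s := Measure.pi fun i => poissonMeasure (crpR S0 r0 r s i).toNNReal
  measurable' := measurable_measure_pi fun i =>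
    measurable_poissonMeasure.comp (measurable_crpR S0 r0 r i).real_toNNReal

instance : IsMarkovKernel (crpCountKernel S0 r0 r) where
  isProbabilityMeasure s := by
    change IsProbabilityMeasure (Measure.pi fun i => poissonMeasure (crpR S0 r0 r s i).toNNReal)
    infer_instance

lemma crpMeasure_eq_compProd :
    crpMeasure S0 r0 r α β = crpFactorLaw α β ⊗ₘ crpCountKernel S0 r0 r := by
  rw [Measure.compProd_eq_comp_prod, crpMeasure]
  congr 1 with s : 1
  rw [Kernel.prod_apply, Kernel.id_apply, Measure.dirac_prod]
  rfl

lemma isProbabilityMeasure_crpMeasure (hα : ∀ j, 0 < α j) (hβ : ∀ j, 0 < β j) :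
    IsProbabilityMeasure (crpMeasure S0 r0 r α β) := by
  have := isProbabilityMeasure_crpFactorLaw hα hβ
  rw [crpMeasure_eq_compProd]
  infer_instance

lemma lintegral_crpCountKernel_eval_mul (s : Fin k → ℝ) (i : Fin n) (f : (Fin n → ℕ) → ℝ≥0∞) :
    ∫⁻ x, x i * f x ∂crpCountKernel S0 r0 r s =
      ENNReal.ofReal (crpR S0 r0 r s i) *
        ∫⁻ x, f (x + Pi.single i 1) ∂crpCountKernel S0 r0 r s :=
  lintegral_pi_poissonMeasure_eval_mul _ i f

lemma ofReal_crpR {s : Fin k → ℝ} {i : Fin n} (h0 : 0 ≤ r0 i * S0) (hr : ∀ j, 0 ≤ r j i)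
    (hs : ∀ j, 0 ≤ s j) :
    ENNReal.ofReal (crpR S0 r0 r s i) =
      ENNReal.ofReal (r0 i * S0) + ∑ j, ENNReal.ofReal (r j i) * ENNReal.ofReal (s j) := by
  have hterm (j : Fin k) : 0 ≤ r j i * s j := mul_nonneg (hr j) (hs j)
  rw [crpR, ENNReal.ofReal_add h0 (Finset.sum_nonneg fun j _ => hterm j),
    ENNReal.ofReal_sum_of_nonneg fun j _ => hterm j]
  simp_rw [ENNReal.ofReal_mul (hr _)]

lemma lintegral_crpFactorLaw_crpR_mul {i : Fin n} (h0 : 0 ≤ r0 i * S0) (hr : ∀ j, 0 ≤ r j i)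
    (hα : ∀ j, 0 < α j) (hβ : ∀ j, 0 < β j) {g : (Fin k → ℝ) → ℝ≥0∞} (hg : Measurable g) :
    ∫⁻ s, ENNReal.ofReal (crpR S0 r0 r s i) * g s ∂crpFactorLaw α β =
      ENNReal.ofReal (r0 i * S0) * ∫⁻ s, g s ∂crpFactorLaw α β +
        ∑ j, ENNReal.ofReal (r j i * (α j * β j)) *
          ∫⁻ s, g s ∂crpFactorLaw (Function.update α j (α j + 1)) β := by
  have hexpand : ∀ᵐ s ∂crpFactorLaw α β, ENNReal.ofReal (crpR S0 r0 r s i) * g s =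
      ENNReal.ofReal (r0 i * S0) * g s +
        ∑ j, ENNReal.ofReal (r j i) * (ENNReal.ofReal (s j) * g s) := by
    filter_upwards [ae_nonneg_crpFactorLaw α β] with s hs
    simp_rw [ofReal_crpR h0 hr hs, add_mul, Finset.sum_mul, mul_assoc]
  rw [lintegral_congr_ae hexpand, lintegral_add_left (by fun_prop), lintegral_const_mul _ hg,
    lintegral_finsetSum _ fun j _ => by fun_prop]
  congr! 2 with j
  rw [lintegral_const_mul _ (by fun_prop), lintegral_crpFactorLaw_eval_mul (hα j) (hβ j) hg,
    ← mul_assoc, ← ENNReal.ofReal_mul (hr j)]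

lemma lintegral_crpMeasure_count_mul {i : Fin n} (h0 : 0 ≤ r0 i * S0) (hr : ∀ j, 0 ≤ r j i)
    (hα : ∀ j, 0 < α j) (hβ : ∀ j, 0 < β j)
    {f : (Fin k → ℝ) × (Fin n → ℕ) → ℝ≥0∞} (hf : Measurable f) :
    ∫⁻ y, y.2 i * f y ∂crpMeasure S0 r0 r α β =
      ENNReal.ofReal (r0 i * S0) *
          ∫⁻ y, f (y.1, y.2 + Pi.single i 1) ∂crpMeasure S0 r0 r α β +
        ∑ j, ENNReal.ofReal (r j i * (α j * β j)) *
          ∫⁻ y, f (y.1, y.2 + Pi.single i 1)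
            ∂crpMeasure S0 r0 r (Function.update α j (α j + 1)) β := by
  have hshift : Measurable fun y : (Fin k → ℝ) × (Fin n → ℕ) => f (y.1, y.2 + Pi.single i 1) := by
    fun_prop
  simp_rw [crpMeasure_eq_compProd, Measure.lintegral_compProd hshift]
  rw [Measure.lintegral_compProd (by fun_prop)]
  simp_rw [lintegral_crpCountKernel_eval_mul _ i fun x => f (_, x)]
  exact lintegral_crpFactorLaw_crpR_mul h0 hr hα hβ hshift.lintegral_kernel_prod_right'

lemma measurableSet_le_crpLoss (ν : Fin n → ℕ) (q : ℕ) :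
    MeasurableSet {y : (Fin k → ℝ) × (Fin n → ℕ) | q ≤ crpLoss ν y} := by
  unfold crpLoss
  measurability

lemma crpLoss_add_single (ν : Fin n → ℕ) (s : Fin k → ℝ) (x : Fin n → ℕ) (i : Fin n) :
    crpLoss ν (s, x + Pi.single i 1) = crpLoss ν (s, x) + ν i := by
  simp [crpLoss, mul_add, Finset.sum_add_distrib, Pi.single_apply]

lemma setLIntegral_le_crpLoss_count (ν : Fin n → ℕ) (q : ℕ) {i : Fin n} (h0 : 0 ≤ r0 i * S0)
    (hr : ∀ j, 0 ≤ r j i) (hα : ∀ j, 0 < α j) (hβ : ∀ j, 0 < β j) :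
    ∫⁻ y in {y | q ≤ crpLoss ν y}, (y.2 i : ℝ≥0∞) ∂crpMeasure S0 r0 r α β =
      ENNReal.ofReal (r0 i * S0) * crpMeasure S0 r0 r α β {y | q - ν i ≤ crpLoss ν y} +
        ∑ j, ENNReal.ofReal (r j i * (α j * β j)) *
          crpMeasure S0 r0 r (Function.update α j (α j + 1)) β {y | q - ν i ≤ crpLoss ν y} := by
  have hq := measurableSet_le_crpLoss (k := k) ν q
  have hshift (y : (Fin k → ℝ) × (Fin n → ℕ)) :
      {y | q ≤ crpLoss ν y}.indicator (1 : (Fin k → ℝ) × (Fin n → ℕ) → ℝ≥0∞)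
          (y.1, y.2 + Pi.single i 1) =
        {y | q - ν i ≤ crpLoss ν y}.indicator 1 y := by
    simp only [Set.indicator_apply, Set.mem_ofPred_eq, crpLoss_add_single, tsub_le_iff_right,
      Pi.one_apply]
  have hmul (y : (Fin k → ℝ) × (Fin n → ℕ)) :
      {y | q ≤ crpLoss ν y}.indicator (fun y => (y.2 i : ℝ≥0∞)) y =
        y.2 i * {y | q ≤ crpLoss ν y}.indicator 1 y := by
    simp [Set.indicator_apply]
  simp_rw [← lintegral_indicator hq, hmul]
  rw [lintegral_crpMeasure_count_mul h0 hr hα hβ (measurable_one.indicator hq)]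
  simp_rw [hshift, lintegral_indicator_one (measurableSet_le_crpLoss ν _)]

theorem crp_es_contribution_general (ν : Fin n → ℕ) (hS0 : 0 ≤ S0) (hr0 : ∀ i, 0 ≤ r0 i)
    (hr : ∀ j i, 0 ≤ r j i) (hα : ∀ j, 0 < α j) (hβ : ∀ j, 0 < β j) (q : ℕ) (i : Fin n) :
    ∫ y in {y | q ≤ crpLoss ν y}, (y.2 i : ℝ) ∂crpMeasure S0 r0 r α β =
      S0 * r0 i * (crpMeasure S0 r0 r α β).real {y | q - ν i ≤ crpLoss ν y} +
        ∑ j, α j * β j * r j i *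
          (crpMeasure S0 r0 r (Function.update α j (α j + 1)) β).real
            {y | q - ν i ≤ crpLoss ν y} := by
  have h0 : 0 ≤ r0 i * S0 := mul_nonneg (hr0 i) hS0
  have hweight (j : Fin k) : 0 ≤ r j i * (α j * β j) :=
    mul_nonneg (hr j i) (mul_pos (hα j) (hβ j)).le
  have := isProbabilityMeasure_crpMeasure (S0 := S0) (r0 := r0) (r := r) hα hβ
  have (j : Fin k) : IsProbabilityMeasure (crpMeasure S0 r0 r (Function.update α j (α j + 1)) β) :=
    isProbabilityMeasure_crpMeasure (Function.forall_update_iff α (fun _ a => 0 < a) |>.2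
      ⟨add_pos (hα j) one_pos, fun j' _ => hα j'⟩) hβ
  rw [integral_eq_lintegral_of_nonneg_ae (ae_of_all _ fun y => Nat.cast_nonneg _)
    (by fun_prop)]
  simp_rw [ENNReal.ofReal_natCast]
  rw [setLIntegral_le_crpLoss_count ν q h0 (hr · i) hα hβ,
    ENNReal.toReal_add (by finiteness) (ENNReal.sum_ne_top.2 fun j _ => by finiteness),
    ENNReal.toReal_sum fun j _ => by finiteness]
  simp_rw [ENNReal.toReal_mul, ENNReal.toReal_ofReal h0, ENNReal.toReal_ofReal (hweight _),
    measureReal_def, mul_comm (r0 i), mul_comm (r _ i)]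

end CreditRisk

/-- Corollary 3: the ES contribution satisfies
`E_α[N_i | L ≥ q_δ(L)] = (S₀ r_{0,i} P_α[L ≥ q−ν_i] + ∑_j α_j β_j r_{j,i} P_{α(j)}[L ≥ q−ν_i])
/ P_α[L ≥ q]` (with ℕ-truncated subtraction, `{L ≥ q − ν_i}` is everything when `q ≤ ν_i`). -/
theorem crp_es_contribution {n k : ℕ} (hn : 0 < n) (hk : 0 < k)
    (ν : Fin n → ℕ) (hν : ∀ i, 0 < ν i)
    (S0 : ℝ) (hS0 : 0 ≤ S0)
    (r0 : Fin n → ℝ) (r : Fin k → Fin n → ℝ)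
    (hr0 : ∀ i, 0 ≤ r0 i) (hr : ∀ j i, 0 ≤ r j i)
    (hr0sum : ∑ i, r0 i = 1) (hrsum : ∀ j, ∑ i, r j i = 1)
    (hrpos : ∀ i, 0 < ∑ j, r j i)
    (α β : Fin k → ℝ) (hα : ∀ j, 0 < α j) (hβ : ∀ j, 0 < β j)
    (δ : ℝ) (hδ : δ ∈ Set.Ioo (0 : ℝ) 1) (i : Fin n) :
    (∫ x in {y | crpVaR (crpMeasure S0 r0 r α β) ν δ ≤ crpLoss ν y},
        (x.2 i : ℝ) ∂(crpMeasure S0 r0 r α β)) /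
      ((crpMeasure S0 r0 r α β)
        {x | crpVaR (crpMeasure S0 r0 r α β) ν δ ≤ crpLoss ν x}).toReal
      = (S0 * r0 i *
          ((crpMeasure S0 r0 r α β)
            {x | crpVaR (crpMeasure S0 r0 r α β) ν δ - ν i ≤ crpLoss ν x}).toReal
         + ∑ j, α j * β j * r j i *
          ((crpMeasure S0 r0 r (Function.update α j (α j + 1)) β)
            {x | crpVaR (crpMeasure S0 r0 r α β) ν δ - ν i ≤ crpLoss ν x}).toReal) /
        ((crpMeasure S0 r0 r α β)
          {x | crpVaR (crpMeasure S0 r0 r α β) ν δ ≤ crpLoss ν x}).toReal :=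
  congrArg (· / _) (crp_es_contribution_general ν hS0 hr0 hr hα hβ _ i)
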